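/- arXiv:1603.05553 — 2 statements merged into one kernel-verified Lean document; each statement's English description precedes it below -/
import Mathlib

section
/- (Weighted Ihara's Theorem) Let G be a finite simple graph with n vertices, m edges, and minimum degree at least 2, and let w : V → ℝ be a function with w(x) > 0 for every vertex x. Define the 2m × 2m matrices indexed by darts: P̃_w((a,b),(c,d)) = w(b)² if b = c and a ≠ d, and 0 otherwise; τ̃((a,b),(c,d)) = w(b)² if b = c and a = d, and 0 otherwise. Define the n × n matrices: Ã(u,v) = w(u)·w(v) if u ∼ v and 0 otherwise, and the diagonal matrix D̃ with D̃(x,x) = Σ_{v ∼ x} w(x)²·w(v)². Then for every real number u, det( (I_{2m} − u·P̃_w)(I_{2m} − u·τ̃) + u²·τ̃² ) = det( I_n − u·Ã + u²·D̃ ). -/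
/-!
Write `P` for `wnbMatrix G w` and `τ` for `wReversal G w`. The two cases defining `P` and `τ` are
complementary, so `P + τ` has entry `w(b)²` at `((a,b),(c,d))` whenever `b = c`, and this matrix
factors through the vertices as `P + τ = H * T`, where `H` (`headMatrix`) and `T` (`tailMatrix`)
are the weighted head and tail incidence matrices (`headMatrix_mul_tailMatrix`). Expanding,

  `(1 - uP)(1 - uτ) + u²τ² = 1 - u(P + τ) + u²(P + τ)τ = 1 - H * (u T (1 - uτ))`.

By the Weinstein–Aronszajn (Sylvester) identity `det (1 - AB) = det (1 - BA)` its determinant is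
that of the vertex-indexed matrix `1 - u T H + u² T τ H`. Here `T H` is the weighted adjacency
matrix (`tailMatrix_mul_headMatrix`), and `T τ H` is the weighted degree matrix, since a walk
along a dart and straight back returns to its start (`tailMatrix_mul_wReversal_mul_headMatrix`).
-/

open BigOperators Finset

/-- The weighted non-backtracking edge adjacency matrix, indexed by darts:
`P̃_w((a,b),(c,d)) = w(b)²` if `b = c` and `a ≠ d`, and `0` otherwise. -/
def wnbMatrix {V : Type*} [Fintype V] [DecidableEq V]
    (G : SimpleGraph V) [DecidableRel G.Adj] (w : V → ℝ) :
    Matrix G.Dart G.Dart ℝ :=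
  fun e f => if e.snd = f.fst ∧ e.fst ≠ f.snd then (w e.snd) ^ 2 else 0

/-- The weighted reversal operator, indexed by darts:
`τ̃((a,b),(c,d)) = w(b)²` if `b = c` and `a = d`, and `0` otherwise. -/
def wReversal {V : Type*} [Fintype V] [DecidableEq V]
    (G : SimpleGraph V) [DecidableRel G.Adj] (w : V → ℝ) :
    Matrix G.Dart G.Dart ℝ :=
  fun e f => if e.snd = f.fst ∧ e.fst = f.snd then (w e.snd) ^ 2 else 0

/-- The weighted adjacency matrix `Ã(u,v) = w(u)w(v)` for `u ∼ v`. -/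
def wAdjMatrix {V : Type*} [Fintype V] [DecidableEq V]
    (G : SimpleGraph V) [DecidableRel G.Adj] (w : V → ℝ) :
    Matrix V V ℝ :=
  fun x y => if G.Adj x y then w x * w y else 0

/-- The weighted diagonal degree matrix `D̃(x,x) = Σ_{v ∼ x} w(x)² w(v)²`. -/
def wDegMatrix {V : Type*} [Fintype V] [DecidableEq V]
    (G : SimpleGraph V) [DecidableRel G.Adj] (w : V → ℝ) :
    Matrix V V ℝ :=
  Matrix.diagonal (fun x => ∑ v ∈ G.neighborFinset x, (w x) ^ 2 * (w v) ^ 2)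

/-- The weighted head incidence matrix: `((a,b),v) ↦ w(b)` if `b = v`, and `0` otherwise. -/
def headMatrix {V : Type*} [DecidableEq V] (G : SimpleGraph V) (w : V → ℝ) :
    Matrix G.Dart V ℝ :=
  fun e v => if e.snd = v then w v else 0

/-- The weighted tail incidence matrix: `(v,(a,b)) ↦ w(a)` if `v = a`, and `0` otherwise. -/
def tailMatrix {V : Type*} [DecidableEq V] (G : SimpleGraph V) (w : V → ℝ) :
    Matrix V G.Dart ℝ :=
  fun v e => if v = e.fst then w v else 0

theorem headMatrix_mul_tailMatrix {V : Type*} [Fintype V] [DecidableEq V]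
    (G : SimpleGraph V) [DecidableRel G.Adj] (w : V → ℝ) :
    headMatrix G w * tailMatrix G w = wnbMatrix G w + wReversal G w := by
  ext e f
  simp only [Matrix.mul_apply, Matrix.add_apply, headMatrix, tailMatrix, wnbMatrix, wReversal,
    ite_mul, zero_mul, Finset.sum_ite_eq, Finset.mem_univ, if_true]
  by_cases h : e.snd = f.fst <;> by_cases h' : e.fst = f.snd <;> simp [h, h', sq]

theorem tailMatrix_mul_headMatrix {V : Type*} [Fintype V] [DecidableEq V]
    (G : SimpleGraph V) [DecidableRel G.Adj] (w : V → ℝ) :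
    tailMatrix G w * headMatrix G w = wAdjMatrix G w := by
  ext x y
  simp only [Matrix.mul_apply, headMatrix, tailMatrix, wAdjMatrix]
  by_cases h : G.Adj x y
  · rw [if_pos h, Finset.sum_eq_single (⟨(x, y), h⟩ : G.Dart)]
    · simp
    · intro e _ he
      by_cases h1 : x = e.fst
      · by_cases h2 : e.snd = y
        · exact absurd (SimpleGraph.Dart.ext _ _ (Prod.ext h1.symm h2)) he
        · simp [h2]
      · simp [h1]
    · simp
  · rw [if_neg h]
    refine Finset.sum_eq_zero fun e _ => ?_
    by_cases h1 : x = e.fst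
    · by_cases h2 : e.snd = y
      · exact absurd (h1 ▸ h2 ▸ e.adj) h
      · simp [h2]
    · simp [h1]

/-- Row `e` of `τ` is supported at the reversed dart, whose head is the tail of `e`. -/
theorem wReversal_mul_headMatrix {V : Type*} [Fintype V] [DecidableEq V]
    (G : SimpleGraph V) [DecidableRel G.Adj] (w : V → ℝ) (e : G.Dart) (v : V) :
    (wReversal G w * headMatrix G w) e v = if e.fst = v then w e.snd ^ 2 * w v else 0 := by
  simp only [Matrix.mul_apply, headMatrix, wReversal]
  rw [Finset.sum_eq_single e.symm]
  · simp
  · intro f _ hf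
    rw [if_neg, zero_mul]
    rintro ⟨h1, h2⟩
    exact hf (SimpleGraph.Dart.ext _ _ (Prod.ext h1.symm h2.symm))
  · simp

theorem tailMatrix_mul_wReversal_mul_headMatrix {V : Type*} [Fintype V] [DecidableEq V]
    (G : SimpleGraph V) [DecidableRel G.Adj] (w : V → ℝ) :
    tailMatrix G w * (wReversal G w * headMatrix G w) = wDegMatrix G w := by
  ext x y
  rw [Matrix.mul_apply]
  simp only [wReversal_mul_headMatrix, tailMatrix, wDegMatrix, Matrix.diagonal_apply]
  by_cases h : x = y
  · subst h
    rw [if_pos rfl]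
    have hterm : ∀ e : G.Dart, ((if x = e.fst then w x else 0) *
        if e.fst = x then w e.snd ^ 2 * w x else 0) =
        if e.fst = x then w x ^ 2 * w e.snd ^ 2 else 0 := by
      intro e
      by_cases h1 : e.fst = x
      · rw [if_pos h1, if_pos h1.symm, if_pos h1]; ring
      · rw [if_neg h1, if_neg h1, mul_zero]
    rw [Finset.sum_congr rfl fun e _ => hterm e, ← Finset.sum_filter]
    -- The darts with tail `x` correspond to the neighbours of `x` via their heads.
    refine Finset.sum_bij (fun e _ => e.snd) ?_ ?_ ?_ ?_
    · intro e he
      rw [Finset.mem_filter] at he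
      rw [SimpleGraph.mem_neighborFinset, ← he.2]
      exact e.adj
    · intro e he f hf hef
      rw [Finset.mem_filter] at he hf
      exact SimpleGraph.Dart.ext _ _ (Prod.ext (he.2.trans hf.2.symm) hef)
    · intro v hv
      rw [SimpleGraph.mem_neighborFinset] at hv
      exact ⟨⟨(x, v), hv⟩, by simp, rfl⟩
    · intro e _
      rfl
  · rw [if_neg h]
    refine Finset.sum_eq_zero fun e _ => ?_
    by_cases h1 : x = e.fst
    · rw [if_neg (fun h2 => h (h1.trans h2)), mul_zero]
    · rw [if_neg h1, zero_mul]

/-- Weighted Ihara's Theorem: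
`det((I - uP̃_w)(I - uτ̃) + u²τ̃²) = det(I - uÃ + u²D̃)`. -/
theorem weighted_ihara {V : Type*} [Fintype V] [DecidableEq V]
    (G : SimpleGraph V) [DecidableRel G.Adj]
    (hdeg : ∀ v : V, 2 ≤ G.degree v)
    (w : V → ℝ) (hw : ∀ x : V, 0 < w x) (u : ℝ) :
    Matrix.det ((1 - u • wnbMatrix G w) * (1 - u • wReversal G w) +
        (u ^ 2) • (wReversal G w ^ 2)) =
      Matrix.det (1 - u • wAdjMatrix G w + (u ^ 2) • wDegMatrix G w) := by
  have hL : (1 - u • wnbMatrix G w) * (1 - u • wReversal G w) + (u ^ 2) • (wReversal G w ^ 2) =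
      1 - headMatrix G w * (u • (tailMatrix G w * (1 - u • wReversal G w))) := by
    rw [Matrix.mul_smul, ← Matrix.mul_assoc, headMatrix_mul_tailMatrix]
    simp only [sub_mul, mul_sub, add_mul, one_mul, mul_one, smul_mul_assoc, mul_smul_comm,
      smul_sub, smul_add, smul_smul, pow_two]
    abel
  have hR : 1 - u • wAdjMatrix G w + (u ^ 2) • wDegMatrix G w =
      1 - (u • (tailMatrix G w * (1 - u • wReversal G w))) * headMatrix G w := by
    rw [← tailMatrix_mul_headMatrix, ← tailMatrix_mul_wReversal_mul_headMatrix,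
      Matrix.smul_mul, Matrix.mul_assoc, Matrix.sub_mul, Matrix.one_mul, Matrix.smul_mul,
      Matrix.mul_sub, Matrix.mul_smul, smul_sub, smul_smul, pow_two]
    abel
  rw [hL, hR, Matrix.det_one_sub_mul_comm]
end

section
/- Let G be a finite simple graph with minimum degree at least 2, and let g : V → ℝ satisfy Σ_{v ∈ V} g(v)·d_v = 0. Define f on the darts of G by f((u,v)) = g(u). Then (i) Σ over all darts (u,v) of f((u,v)) = 0, and (ii) (1/2) · Σ over pairs of darts (u,v), (v,w) with w ≠ u of (f(u,v) − f(v,w))² / (d_v − 1) = Σ_{{u,v} ∈ E} (g(u) − g(v))², and Σ over darts (u,v) of f((u,v))² = Σ_{u ∈ V} g(u)²·d_u. -/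
/-!
Once a dart `e` is fixed, the lifted function takes the same value `g e.snd` on all darts leaving
`e.snd`, and exactly `d - 1` of these, with `d` the degree of `e.snd`, are different from the
reversal of `e`. The weight `1 / (d - 1)` therefore cancels this count, which is nonzero because
`2 ≤ d`, and the non-backtracking form collapses to `∑ e, (g e.fst - g e.snd) ^ 2`. Each edge
carries two darts, whence the factor `1 / 2`. The other two identities group the darts by their
tail, each vertex being the tail of as many darts as its degree.
-/

open BigOperators Finset

theorem sum_dart_fst {V : Type*} [Fintype V] [DecidableEq V]
    (G : SimpleGraph V) [DecidableRel G.Adj] (h : V → ℝ) :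
    ∑ e : G.Dart, h e.fst = ∑ v : V, h v * (G.degree v : ℝ) := by
  rw [← Finset.sum_fiberwise (s := (univ : Finset G.Dart)) (g := fun e => e.fst)]
  refine Finset.sum_congr rfl fun v _ => ?_
  have hc : ∀ e ∈ (univ : Finset G.Dart).filter (fun e => e.fst = v), h e.fst = h v := by
    intro e he
    rw [(Finset.mem_filter.1 he).2]
  rw [Finset.sum_congr rfl hc, Finset.sum_const, nsmul_eq_mul,
    G.dart_fst_fiber_card_eq_degree v, mul_comm]

/-- Every edge carries exactly two darts. -/
theorem sum_dart_edge {V : Type*} [Fintype V] [DecidableEq V]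
    (G : SimpleGraph V) [DecidableRel G.Adj] (h : Sym2 V → ℝ) :
    ∑ e : G.Dart, h e.edge = 2 * ∑ e ∈ G.edgeFinset, h e := by
  rw [← Finset.sum_fiberwise_of_maps_to (s := (univ : Finset G.Dart)) (t := G.edgeFinset)
    (g := fun e => e.edge) (fun e _ => SimpleGraph.mem_edgeFinset.2 e.edge_mem), Finset.mul_sum]
  refine Finset.sum_congr rfl fun v hv => ?_
  have hc : ∀ e ∈ (univ : Finset G.Dart).filter (fun e => e.edge = v), h e.edge = h v := by
    intro e he
    rw [(Finset.mem_filter.1 he).2]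
  rw [Finset.sum_congr rfl hc, Finset.sum_const, nsmul_eq_mul,
    G.dart_edge_fiber_card v (SimpleGraph.mem_edgeFinset.1 hv)]
  norm_num

/-- The non-backtracking continuations of `e` are the darts leaving `e.snd`, except `e.symm`. -/
theorem card_nonbacktracking {V : Type*} [Fintype V] [DecidableEq V]
    (G : SimpleGraph V) [DecidableRel G.Adj] (e : G.Dart) :
    (#{e' : G.Dart | e.snd = e'.fst ∧ e'.snd ≠ e.fst} : ℝ) = (G.degree e.snd : ℝ) - 1 := by
  have hset : ({e' : G.Dart | e.snd = e'.fst ∧ e'.snd ≠ e.fst} : Finset G.Dart) =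
      ({e' : G.Dart | e'.fst = e.snd} : Finset G.Dart).erase e.symm := by
    ext e'
    simp only [Finset.mem_filter, Finset.mem_univ, true_and, Finset.mem_erase, ne_eq,
      SimpleGraph.Dart.ext_iff, Prod.ext_iff, SimpleGraph.Dart.symm_toProd, Prod.fst_swap,
      Prod.snd_swap]
    grind
  have hmem : e.symm ∈ ({e' : G.Dart | e'.fst = e.snd} : Finset G.Dart) := by simp
  rw [hset, Finset.cast_card_erase_of_mem hmem, G.dart_fst_fiber_card_eq_degree e.snd]

/-- The lift of a vertex function `g` orthogonal to the degree vector to the darts of `G` via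
`f((u,v)) = g(u)`: it sums to zero over darts, its non-backtracking Dirichlet form equals the
Dirichlet form of `g`, and its squared norm equals the degree-weighted squared norm of `g`. -/
theorem dart_lift_of_vertex_function {V : Type*} [Fintype V] [DecidableEq V]
    (G : SimpleGraph V) [DecidableRel G.Adj]
    (hdeg : ∀ v : V, 2 ≤ G.degree v)
    (g : V → ℝ) (hg : ∑ v : V, g v * (G.degree v : ℝ) = 0) :
    (∑ e : G.Dart, g e.fst = 0) ∧
    ((1 / 2 : ℝ) *
        ∑ e : G.Dart, ∑ e' : G.Dart,
          (if e.snd = e'.fst ∧ e'.snd ≠ e.fst then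
            (g e.fst - g e'.fst) ^ 2 / ((G.degree e.snd : ℝ) - 1) else 0) =
      ∑ e ∈ G.edgeFinset, Sym2.lift ⟨fun u v => (g u - g v) ^ 2, fun u v => by ring⟩ e) ∧
    (∑ e : G.Dart, (g e.fst) ^ 2 = ∑ u : V, g u ^ 2 * (G.degree u : ℝ)) := by
  refine ⟨by rw [sum_dart_fst G g, hg], ?_, sum_dart_fst G fun u => g u ^ 2⟩
  have inner : ∀ e : G.Dart, ∑ e' : G.Dart,
      (if e.snd = e'.fst ∧ e'.snd ≠ e.fst then
        (g e.fst - g e'.fst) ^ 2 / ((G.degree e.snd : ℝ) - 1) else 0) =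
      (Sym2.lift ⟨fun u v => (g u - g v) ^ 2, fun u v => by ring⟩ : Sym2 V → ℝ) e.edge := by
    intro e
    have hd : (2 : ℝ) ≤ G.degree e.snd := by exact_mod_cast hdeg e.snd
    have hne : (G.degree e.snd : ℝ) - 1 ≠ 0 := by linarith
    have hc : ∀ e' ∈ ({e' : G.Dart | e.snd = e'.fst ∧ e'.snd ≠ e.fst} : Finset G.Dart),
        (g e.fst - g e'.fst) ^ 2 / ((G.degree e.snd : ℝ) - 1) =
          (g e.fst - g e.snd) ^ 2 / ((G.degree e.snd : ℝ) - 1) := by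
      intro e' he'
      rw [(Finset.mem_filter.1 he').2.1]
    rw [← Finset.sum_filter, Finset.sum_congr rfl hc, Finset.sum_const, nsmul_eq_mul,
      card_nonbacktracking, mul_div_cancel₀ _ hne]
    rfl
  rw [Finset.sum_congr rfl fun e _ => inner e, sum_dart_edge]
  ring
end
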